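/- arXiv:math/0405124 — 2 statements merged into one kernel-verified Lean document; each statement's English description precedes it below -/
import Mathlib

section
/- Let D be an integral domain that is not a field and let ⋆ be a semistar operation on D. Then D is a ⋆-almost Dedekind domain if and only if D_P is a rank-one discrete valuation ring for every quasi-⋆_f-prime ideal P of D. -/
open scoped Pointwise

section SemistarDefs

variable {D : Type*} [CommRing D] [IsDomain D]
variable {K : Type*} [Field K] [Algebra D K] [IsFractionRing D K]

/-- `star` is a semistar operation on the integral domain `D` with quotient field `K`:
a map on (nonzero) `D`-submodules of `K` satisfying `(xE)^⋆ = x·E^⋆`, monotonicity,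
extensivity and idempotence. -/
structure IsSemistarOperation (star : Submodule D K → Submodule D K) : Prop where
  ne_bot : ∀ {E : Submodule D K}, E ≠ ⊥ → star E ≠ ⊥
  map_smul : ∀ (x : K), x ≠ 0 → ∀ {E : Submodule D K}, E ≠ ⊥ →
    star (Submodule.map (LinearMap.mulLeft D x) E) = Submodule.map (LinearMap.mulLeft D x) (star E)
  mono : ∀ {E F : Submodule D K}, E ≠ ⊥ → F ≠ ⊥ → E ≤ F → star E ≤ star F
  le_star : ∀ {E : Submodule D K}, E ≠ ⊥ → E ≤ star E
  star_star : ∀ {E : Submodule D K}, E ≠ ⊥ → star (star E) = star E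

/-- The image in `K` of an ideal `I` of `D`, as a `D`-submodule of `K`. -/
def idealExt (K : Type*) [Field K] [Algebra D K] (I : Ideal D) : Submodule D K :=
  Submodule.map (Algebra.linearMap D K) I

/-- `I` is a quasi-⋆-ideal: a nonzero ideal of `D` with `I = I^⋆ ∩ D`. -/
def QuasiStarIdeal (star : Submodule D K → Submodule D K) (I : Ideal D) : Prop :=
  I ≠ ⊥ ∧ Submodule.comap (Algebra.linearMap D K) (star (idealExt K I)) = I

/-- `P` is a quasi-⋆-prime: a prime ideal which is a quasi-⋆-ideal. -/
def QuasiStarPrime (star : Submodule D K → Submodule D K) (P : Ideal D) : Prop :=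
  P.IsPrime ∧ QuasiStarIdeal star P

/-- `M` is a quasi-⋆-maximal ideal: maximal in the set of proper quasi-⋆-ideals of `D`. -/
def QuasiStarMaximal (star : Submodule D K → Submodule D K) (M : Ideal D) : Prop :=
  QuasiStarIdeal star M ∧ M ≠ ⊤ ∧
    ∀ J : Ideal D, QuasiStarIdeal star J → J ≠ ⊤ → M ≤ J → J = M

/-- The finite-type semistar operation `⋆_f` associated to `⋆`:
`E^{⋆_f} = ⋃ { F^⋆ : F nonzero finitely generated, F ⊆ E }`. -/
def finTypeOp (star : Submodule D K → Submodule D K) : Submodule D K → Submodule D K :=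
  fun E => ⨆ (F : Submodule D K) (_ : F ≠ ⊥) (_ : F.FG) (_ : F ≤ E), star F

/-- The extension `E·D_Q` of a `D`-submodule `E` of `K` to the localization of `D` at
(the complement of) `Q`, described as `{ x ∈ K : s·x ∈ E for some s ∉ Q }`. -/
def extendToPrime (Q : Ideal D) (E : Submodule D K) : Submodule D K :=
  Submodule.span D {x : K | ∃ s : D, s ∉ Q ∧ algebraMap D K s * x ∈ E}

/-- The stable semistar operation of finite type `⋆̃` associated to `⋆`:
`E^⋆̃ = ⋂ { E·D_Q : Q a quasi-⋆_f-maximal ideal of D }`. -/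
def stableOp (star : Submodule D K → Submodule D K) : Submodule D K → Submodule D K :=
  fun E => ⨅ (Q : Ideal D) (_ : QuasiStarMaximal (finTypeOp star) Q), extendToPrime Q E

/-- A rank-one discrete valuation ring: a (domain which is a) local PID which is not a field. -/
def IsDVR (R : Type*) [CommRing R] : Prop :=
  ∃ h : IsDomain R, @IsDiscreteValuationRing R _ h

/-- A valuation domain. -/
def IsValuationDomain (R : Type*) [CommRing R] : Prop :=
  ∃ h : IsDomain R, @ValuationRing R _ h

/-- `D` is a ⋆-almost Dedekind domain: `D_M` is a rank-one discrete valuation ring for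
every quasi-⋆_f-maximal ideal `M` of `D`. -/
def StarADD (star : Submodule D K → Submodule D K) : Prop :=
  ∀ (M : Ideal D) [M.IsPrime], QuasiStarMaximal (finTypeOp star) M →
    IsDVR (Localization.AtPrime M)

/-- `D` is a Prüfer ⋆-multiplication domain: `D_M` is a valuation domain for every
quasi-⋆_f-maximal ideal `M` of `D`. -/
def StarPMD (star : Submodule D K → Submodule D K) : Prop :=
  ∀ (M : Ideal D) [M.IsPrime], QuasiStarMaximal (finTypeOp star) M →
    IsValuationDomain (Localization.AtPrime M)

/-- `D` is ⋆-Noetherian: ascending chain condition on quasi-⋆-ideals. -/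
def StarNoetherian (star : Submodule D K → Submodule D K) : Prop :=
  ∀ c : ℕ →o Ideal D, (∀ n, QuasiStarIdeal star (c n)) → ∃ n, ∀ m, n ≤ m → c m = c n

/-- `D` is a ⋆-Dedekind domain: ⋆-Noetherian and a P⋆MD. -/
def StarDedekind (star : Submodule D K → Submodule D K) : Prop :=
  StarNoetherian star ∧ StarPMD star

/-- `D` has the ⋆_f-finite character property: every nonzero element of `D` lies in only
finitely many quasi-⋆_f-maximal ideals. -/
def StarFiniteCharacter (star : Submodule D K → Submodule D K) : Prop :=
  ∀ d : D, d ≠ 0 → {M : Ideal D | QuasiStarMaximal (finTypeOp star) M ∧ d ∈ M}.Finite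

/-- The `v`-operation `E ↦ (D : (D : E))`. -/
def vOp : Submodule D K → Submodule D K := fun E => 1 / (1 / E)

/-- A nonzero `D`-submodule `E` of `K` is quasi-∗-invertible if `(E·(D^∗ : E))^∗ = D^∗`. -/
def QuasiStarInvertible (star : Submodule D K → Submodule D K) (E : Submodule D K) : Prop :=
  star (E * (star 1 / E)) = star (1 : Submodule D K)

/-- `D` has the ∗-cancellation law: for nonzero fractional ideals `A`, `B`, `C`,
`(AB)^∗ = (AC)^∗` implies `B^∗ = C^∗`. -/
def StarCancellation (star : Submodule D K → Submodule D K) : Prop :=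
  ∀ A B C : Submodule D K, A ≠ ⊥ → B ≠ ⊥ → C ≠ ⊥ →
    IsFractional (nonZeroDivisors D) A → IsFractional (nonZeroDivisors D) B →
    IsFractional (nonZeroDivisors D) C →
    star (A * B) = star (A * C) → star B = star C

/-- The ∗-dimension of `D`: the supremum of the lengths of chains of quasi-∗-prime ideals
of `D` (between `(0)` and a quasi-∗-prime). -/
noncomputable def starDim (star : Submodule D K → Submodule D K) : ℕ∞ :=
  ⨆ (k : ℕ) (_ : ∃ c : Fin k → Ideal D, StrictMono c ∧ ∀ i, QuasiStarPrime star (c i)),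
    (k : ℕ∞)

/-- A submodule `T` of `K` (containing the image of an integral domain with quotient
field `K`) is integrally closed (in `K`) if every `x ∈ K` satisfying a monic polynomial
equation with coefficients in `T` belongs to `T`. -/
def IntegrallyClosedSub (T : Submodule D K) : Prop :=
  ∀ x : K, (∃ (n : ℕ) (c : Fin n → K), (∀ i, c i ∈ T) ∧
    x ^ n = ∑ i : Fin n, c i * x ^ (i : ℕ)) → x ∈ T

/-- The content ideal `c(p)` of a polynomial: the ideal generated by its coefficients. -/
def contentIdeal (p : Polynomial D) : Ideal D := Ideal.span (Set.range p.coeff)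

/-- The multiplicative set `N(⋆) = { h ∈ D[X] : h ≠ 0, c(h)^⋆ = D^⋆ }` (as a submonoid,
via the closure of this multiplicatively closed set). -/
noncomputable def nagataMonoid (star : Submodule D K → Submodule D K) : Submonoid (Polynomial D) :=
  Submonoid.closure
    {p : Polynomial D | p ≠ 0 ∧ star (idealExt K (contentIdeal p)) = star (1 : Submodule D K)}

/-- The Nagata ring `Na(D,⋆) = D[X]_{N(⋆)}`. -/
abbrev NagataRing (star : Submodule D K → Submodule D K) :=
  Localization (nagataMonoid star)

/-- `V` is a valuation overring of `D` (inside the quotient field `K`): `D ⊆ V ⊆ K` and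
for every nonzero `x ∈ K`, `x ∈ V` or `x⁻¹ ∈ V`. -/
def IsValuationOverring (D : Type*) [CommRing D] {K : Type*} [Field K] [Algebra D K]
    (V : Subring K) : Prop :=
  (∀ d : D, algebraMap D K d ∈ V) ∧ ∀ x : K, x ≠ 0 → (x ∈ V ∨ x⁻¹ ∈ V)

/-- `V` is a ∗-valuation overring of `D`: a valuation overring such that `F^∗ ⊆ FV` for
every nonzero finitely generated `D`-submodule `F` of `K`. -/
def IsStarValuationOverring (star : Submodule D K → Submodule D K) (V : Subring K) : Prop :=
  IsValuationOverring D V ∧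
    ∀ F : Submodule D K, F ≠ ⊥ → F.FG →
      star F ≤ Submodule.span D ((F : Set K) * (V : Set K))

/-- `D` is a Krull domain: there is a family of rank-one discrete valuation overrings of `D`
with quotient field `K` whose intersection is `D`, with finite character. -/
def IsKrullDomain (D : Type*) [CommRing D] (K : Type*) [Field K] [Algebra D K] : Prop :=
  ∃ 𝒱 : Set (Subring K),
    (∀ V ∈ 𝒱, (∀ d : D, algebraMap D K d ∈ V) ∧ IsDVR V ∧
      ∀ x : K, ∃ a ∈ V, ∃ b ∈ V, b ≠ 0 ∧ x * b = a) ∧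
    (⋂ V ∈ 𝒱, (V : Set K)) = Set.range (algebraMap D K) ∧
    ∀ d : D, d ≠ 0 → {V ∈ 𝒱 | ¬ ∃ y ∈ V, algebraMap D K d * y = 1}.Finite

end SemistarDefs

/-!
A nonzero prime `P` lying under a quasi-⋆_f-maximal ideal `M` with `D_M` a discrete valuation ring
equals `M`, since `D_M` has only one nonzero prime. So it suffices that every proper
quasi-⋆_f-ideal lies in a quasi-⋆_f-maximal ideal and that the latter is prime. The former is
Zorn's lemma: `⋆_f` commutes with directed unions because finitely generated submodules are
compact. For the latter, if `a * b ∈ M` with `b ≠ 0`, then the colon ideal `(M : b)` is again a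
quasi-⋆_f-ideal and contains both `M` and `a`, so by maximality `a ∈ M` or `1 ∈ (M : b)`.
-/

section General

theorem smul_submodule_ne_bot {R M : Type*} [CommSemiring R] [IsCancelMulZero R] [AddCommMonoid M]
    [Module R M] [Module.IsTorsionFree R M] {r : R} (hr : r ≠ 0) {N : Submodule R M} (hN : N ≠ ⊥) :
    r • N ≠ ⊥ := by
  obtain ⟨x, hxN, hx⟩ := Submodule.exists_mem_ne_zero_of_ne_bot hN
  exact (Submodule.ne_bot_iff _).2
    ⟨r • x, Submodule.smul_mem_pointwise_smul x r N hxN, smul_ne_zero hr hx⟩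

theorem exists_le_of_fg_of_le_iSup_of_directed {R M ι : Type*} [Semiring R] [AddCommMonoid M]
    [Module R M] [Nonempty ι] {N : ι → Submodule R M} (hN : Directed (· ≤ ·) N)
    {F : Submodule R M} (hF : F.FG) (hFN : F ≤ ⨆ i, N i) : ∃ i, F ≤ N i := by
  have hcompact := (CompleteLattice.isCompactElement_iff_le_of_directed_sSup_le _ F).1
    ((Submodule.fg_iff_compact F).1 hF)
  obtain ⟨_, ⟨i, rfl⟩, hi⟩ := hcompact _ (Set.range_nonempty N) hN.directedOn_range hFN
  exact ⟨i, hi⟩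

theorem eq_of_le_of_dimensionLEOne_atPrime {R : Type*} [CommRing R] [IsDomain R] {P M : Ideal R}
    [P.IsPrime] [M.IsPrime] [Ring.DimensionLEOne (Localization.AtPrime M)] (hP : P ≠ ⊥)
    (hPM : P ≤ M) : P = M := by
  have hprime := Ideal.isPrime_map_of_isLocalizationAtPrime (S := Localization.AtPrime M) M hPM
  have hne : P.map (algebraMap R (Localization.AtPrime M)) ≠ ⊥ := by
    rwa [Ne, Ideal.map_eq_bot_iff_of_injective
      (IsLocalization.injective _ M.primeCompl_le_nonZeroDivisors)]
  have hmax := IsLocalRing.eq_maximalIdeal (hprime.isMaximal hne)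
  rw [← Ideal.under_map_of_isLocalizationAtPrime (S := Localization.AtPrime M) M hPM, hmax]
  exact Localization.AtPrime.under_maximalIdeal

end General

section SemistarLemmas

variable {D : Type*} [CommRing D] {K : Type*} [Field K] [Algebra D K]
variable {star : Submodule D K → Submodule D K}

theorem IsSemistarOperation.smul_star [FaithfulSMul D K] (hstar : IsSemistarOperation star) {b : D}
    (hb : b ≠ 0) {E : Submodule D K} (hE : E ≠ ⊥) : b • star E = star (b • E) := by
  have smul_eq_map (F : Submodule D K) :
      b • F = F.map (LinearMap.mulLeft D (algebraMap D K b)) := by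
    rw [Submodule.pointwise_smul_def]
    congr 1
    ext x
    exact Algebra.smul_def b x
  have hbK : algebraMap D K b ≠ 0 := (FaithfulSMul.algebraMap_eq_zero_iff D K).not.2 hb
  rw [smul_eq_map, smul_eq_map, hstar.map_smul _ hbK hE]

theorem star_le_finTypeOp {E F : Submodule D K} (hF : F ≠ ⊥) (hFfg : F.FG) (hFE : F ≤ E) :
    star F ≤ finTypeOp star E :=
  le_iSup_of_le F <| le_iSup_of_le hF <| le_iSup_of_le hFfg <| le_iSup_of_le hFE le_rfl

theorem finTypeOp_le_iff {E G : Submodule D K} :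
    finTypeOp star E ≤ G ↔ ∀ F : Submodule D K, F ≠ ⊥ → F.FG → F ≤ E → star F ≤ G := by
  simp only [finTypeOp, iSup_le_iff]

theorem finTypeOp_mono : Monotone (finTypeOp star) := fun _ _ hEE' =>
  finTypeOp_le_iff.2 fun _ hF hFfg hFE => star_le_finTypeOp hF hFfg (hFE.trans hEE')

theorem finTypeOp_iSup_of_directed {ι : Type*} [Nonempty ι] {E : ι → Submodule D K}
    (hE : Directed (· ≤ ·) E) : finTypeOp star (⨆ i, E i) = ⨆ i, finTypeOp star (E i) := by
  refine le_antisymm (finTypeOp_le_iff.2 fun F hF hFfg hFE => ?_) finTypeOp_mono.le_map_iSup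
  obtain ⟨i, hFi⟩ := exists_le_of_fg_of_le_iSup_of_directed hE hFfg hFE
  exact le_iSup_of_le i (star_le_finTypeOp hF hFfg hFi)

theorem le_finTypeOp (le_star : ∀ {E : Submodule D K}, E ≠ ⊥ → E ≤ star E) (E : Submodule D K) :
    E ≤ finTypeOp star E := by
  intro x hx
  rcases eq_or_ne x 0 with rfl | hx0
  · exact zero_mem _
  · have hspan : Submodule.span D {x} ≠ ⊥ := Submodule.span_singleton_eq_bot.not.2 hx0
    have hspan_le : Submodule.span D {x} ≤ E := (Submodule.span_singleton_le_iff_mem x E).2 hx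
    exact star_le_finTypeOp hspan (Submodule.fg_span_singleton x) hspan_le
      (le_star hspan (Submodule.mem_span_singleton_self x))

theorem smul_finTypeOp_le [IsDomain D] [FaithfulSMul D K] {b : D} (hb : b ≠ 0)
    (smul_star_le : ∀ {E : Submodule D K}, E ≠ ⊥ → b • star E ≤ star (b • E))
    (E : Submodule D K) : b • finTypeOp star E ≤ finTypeOp star (b • E) := by
  simp only [finTypeOp, Submodule.smul_iSup', iSup_le_iff]
  intro F hF hFfg hFE
  exact (smul_star_le hF).trans <| star_le_finTypeOp (smul_submodule_ne_bot hb hF)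
    (hFfg.map _) (smul_mono_right b hFE)

theorem QuasiStarIdeal.iSup_of_directed {ι : Type*} [Nonempty ι] {I : ι → Ideal D}
    (hdir : Directed (· ≤ ·) I) (hI : ∀ i, QuasiStarIdeal (finTypeOp star) (I i)) :
    QuasiStarIdeal (finTypeOp star) (⨆ i, I i) := by
  have hdir_ext : Directed (· ≤ ·) fun i => idealExt K (I i) :=
    hdir.mono_comp _ fun _ _ h => Submodule.map_mono h
  have star_iSup : finTypeOp star (idealExt K (⨆ i, I i)) =
      ⨆ i, finTypeOp star (idealExt K (I i)) := by
    rw [idealExt, Submodule.map_iSup]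
    exact finTypeOp_iSup_of_directed hdir_ext
  obtain ⟨i₀⟩ := ‹Nonempty ι›
  refine ⟨ne_bot_of_le_ne_bot (hI i₀).1 (le_iSup I i₀), ?_⟩
  ext x
  have hdir_star : Directed (· ≤ ·) fun i => finTypeOp star (idealExt K (I i)) :=
    hdir_ext.mono_comp (g := finTypeOp star) _ finTypeOp_mono
  rw [Submodule.mem_comap, star_iSup, Submodule.mem_iSup_of_directed _ hdir_star,
    Submodule.mem_iSup_of_directed _ hdir]
  exact exists_congr fun i => SetLike.ext_iff.1 (hI i).2 x

theorem exists_quasiStarMaximal_ge {I : Ideal D} (hI : QuasiStarIdeal (finTypeOp star) I)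
    (hI_top : I ≠ ⊤) : ∃ M, QuasiStarMaximal (finTypeOp star) M ∧ I ≤ M := by
  let proper : Set (Ideal D) := {J | QuasiStarIdeal (finTypeOp star) J ∧ J ≠ ⊤}
  have chain_bounded : ∀ c ⊆ proper, IsChain (· ≤ ·) c →
      ∀ J ∈ c, ∃ ub ∈ proper, ∀ J ∈ c, J ≤ ub := by
    intro c hc hchain J hJ
    have : Nonempty c := ⟨⟨J, hJ⟩⟩
    have hdir := hchain.directedOn.directed_val
    have hsup_quasi := QuasiStarIdeal.iSup_of_directed hdir fun J => (hc J.2).1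
    refine ⟨_, ⟨hsup_quasi, ?_⟩, fun J hJ => le_iSup Subtype.val (⟨J, hJ⟩ : c)⟩
    rw [Ideal.ne_top_iff_one, Submodule.mem_iSup_of_directed _ hdir]
    rintro ⟨J, hone⟩
    exact (hc J.2).2 ((Ideal.eq_top_iff_one _).2 hone)
  obtain ⟨M, hIM, hM⟩ := zorn_le_nonempty₀ proper chain_bounded I ⟨hI, hI_top⟩
  exact ⟨M, ⟨hM.prop.1, hM.prop.2, fun J hJ hJ_top hMJ => (hM.eq_of_le ⟨hJ, hJ_top⟩ hMJ).symm⟩, hIM⟩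

theorem smul_idealExt_colon_le (I : Ideal D) (b : D) :
    b • idealExt K (I.colon {b}) ≤ idealExt K I := by
  rintro _ ⟨_, ⟨x, hx, rfl⟩, rfl⟩
  refine ⟨x • b, Submodule.mem_colon_singleton.1 hx, ?_⟩
  simp [Algebra.smul_def, mul_comm]

theorem QuasiStarIdeal.colon_singleton (star_mono : Monotone star) (le_star : ∀ E, E ≤ star E)
    {b : D} (smul_star_le : ∀ E, b • star E ≤ star (b • E)) {I : Ideal D}
    (hI : QuasiStarIdeal star I) : QuasiStarIdeal star (I.colon {b}) := by
  refine ⟨ne_bot_of_le_ne_bot hI.1 Ideal.le_colon, le_antisymm (fun x hx => ?_) fun x hx =>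
    le_star _ (Submodule.mem_map_of_mem hx)⟩
  have hbx : b • algebraMap D K x ∈ star (idealExt K I) :=
    star_mono (smul_idealExt_colon_le I b)
      (smul_star_le _ (Submodule.smul_mem_pointwise_smul _ b _ hx))
  rw [Submodule.mem_colon_singleton, ← hI.2, Submodule.mem_comap]
  simpa [Algebra.smul_def, mul_comm] using hbx

theorem QuasiStarMaximal.isPrime (star_mono : Monotone star) (le_star : ∀ E, E ≤ star E)
    (smul_star_le : ∀ {b : D}, b ≠ 0 → ∀ E, b • star E ≤ star (b • E)) {M : Ideal D}
    (hM : QuasiStarMaximal star M) : M.IsPrime := by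
  obtain ⟨hM_quasi, hM_top, hM_max⟩ := hM
  refine ⟨hM_top, fun {a b} hab => or_iff_not_imp_left.2 fun ha => ?_⟩
  rcases eq_or_ne b 0 with rfl | hb
  · exact M.zero_mem
  · have hcolon := hM_quasi.colon_singleton star_mono le_star (smul_star_le hb)
    have ha_colon : a ∈ M.colon {b} := Submodule.mem_colon_singleton.2 hab
    have hcolon_top : M.colon {b} = ⊤ := by
      by_contra hne
      exact ha (hM_max _ hcolon hne Ideal.le_colon ▸ ha_colon)
    exact (Submodule.colon_eq_top_iff_subset _).1 hcolon_top rfl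

theorem starADD_iff_dvr_at_quasiStarFinPrimes_general [IsDomain D] [FaithfulSMul D K]
    (star : Submodule D K → Submodule D K)
    (le_star : ∀ {E : Submodule D K}, E ≠ ⊥ → E ≤ star E)
    (smul_star_le : ∀ {b : D}, b ≠ 0 → ∀ {E : Submodule D K}, E ≠ ⊥ →
      b • star E ≤ star (b • E)) :
    StarADD star ↔
      ∀ (P : Ideal D) [P.IsPrime], QuasiStarIdeal (finTypeOp star) P →
        IsDVR (Localization.AtPrime P) := by
  refine ⟨fun hADD P hP hP_quasi => ?_, fun hDVR M _ hM => hDVR M hM.1⟩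
  obtain ⟨M, hM, hPM⟩ := exists_quasiStarMaximal_ge hP_quasi hP.ne_top
  have hM_prime := hM.isPrime finTypeOp_mono (le_finTypeOp le_star)
    fun hb => smul_finTypeOp_le hb (smul_star_le hb)
  obtain ⟨_, _⟩ := hADD M hM
  obtain rfl := eq_of_le_of_dimensionLEOne_atPrime hP_quasi.1 hPM
  exact hADD P hM

end SemistarLemmas

section Statement

variable {D : Type*} [CommRing D] [IsDomain D]
variable {K : Type*} [Field K] [Algebra D K] [IsFractionRing D K]

/-- `D` an integral domain that is not a field, `⋆` a semistar operation on
`D`. Then `D` is a ⋆-almost Dedekind domain iff `D_P` is a rank-one discrete valuation ring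
for every quasi-⋆_f-prime ideal `P` of `D`. -/
theorem starADD_iff_dvr_at_quasiStarFinPrimes
    (hD : ¬ IsField D) (star : Submodule D K → Submodule D K)
    (hstar : IsSemistarOperation star) :
    StarADD star ↔
      ∀ (P : Ideal D) [P.IsPrime], QuasiStarIdeal (finTypeOp star) P →
        IsDVR (Localization.AtPrime P) :=
  starADD_iff_dvr_at_quasiStarFinPrimes_general star hstar.le_star
    fun hb _ hE => (hstar.smul_star hb hE).le

end Statement
end

section
/- Let D be an integral domain and ⋆ a semistar operation on D. Then D is ⋆-Noetherian if and only if for each nonzero ideal I of D there exists a finitely generated ideal J of D with J ⊆ I and I^⋆ = J^⋆. Consequently, D is ⋆-Noetherian if and only if for each nonzero fractional ideal E of D there exists a nonzero finitely generated D-submodule F of K with F ⊆ E and F^⋆ = E^⋆. -/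
/-!
The ideals `I^⋆ ∩ D` are the closed elements of a closure operation on the nonzero ideals of `D`,
and `I^⋆ ⊆ J^⋆` holds exactly when `I ⊆ J^⋆ ∩ D`. Given the ascending chain condition on closed
ideals, choose a nonzero finitely generated `J ⊆ I` with `J^⋆ ∩ D` maximal: adjoining any `x ∈ I`
to `J` does not enlarge it, so `I ⊆ J^⋆ ∩ D` and `I^⋆ = J^⋆`. Conversely, if the union `I` of a
chain of closed ideals has `I^⋆ = J^⋆` with `J ⊆ I` finitely generated, then `J` lies in some
member of the chain, and this member already contains all the others. Fractional ideals are scaled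
into `D`, since `⋆` commutes with multiplication by nonzero elements of `K`.
-/

open scoped Pointwise

section IdealExt

variable {D : Type*} [CommRing D] {K : Type*} [Field K] [Algebra D K]

theorem exists_idealExt_eq {E : Submodule D K} (hE : E ≤ 1) : ∃ I : Ideal D, idealExt K I = E :=
  ⟨E.comap (Algebra.linearMap D K),
    Submodule.map_comap_eq_of_le (hE.trans_eq Submodule.one_eq_range)⟩

theorem idealExt_le_one (I : Ideal D) : idealExt K I ≤ 1 :=
  LinearMap.map_le_range.trans_eq Submodule.one_eq_range.symm

variable [FaithfulSMul D K]

theorem idealExt_le_idealExt_iff {I J : Ideal D} : idealExt K I ≤ idealExt K J ↔ I ≤ J :=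
  Submodule.map_le_map_iff_of_injective (FaithfulSMul.algebraMap_injective D K) I J

theorem idealExt_ne_bot_iff {I : Ideal D} : idealExt K I ≠ ⊥ ↔ I ≠ ⊥ :=
  ((Submodule.map_injective_of_injective
    (FaithfulSMul.algebraMap_injective D K)).eq_iff' (Submodule.map_bot _)).not

theorem fg_idealExt_iff {I : Ideal D} : (idealExt K I).FG ↔ I.FG :=
  Submodule.fg_map_iff _ (FaithfulSMul.algebraMap_injective D K)

end IdealExt

section Scaling

variable {D : Type*} [CommRing D]

theorem map_mulLeft_inv_map_mulLeft {K : Type*} [DivisionRing K] [Algebra D K] {x : K}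
    (hx : x ≠ 0) (E : Submodule D K) :
    (E.map (LinearMap.mulLeft D x)).map (LinearMap.mulLeft D x⁻¹) = E := by
  rw [← Submodule.map_comp, ← LinearMap.mulLeft_mul, inv_mul_cancel₀ hx, LinearMap.mulLeft_one,
    Submodule.map_id]

theorem map_mulLeft_ne_bot {K : Type*} [DivisionRing K] [Algebra D K] {x : K} (hx : x ≠ 0)
    {E : Submodule D K} (hE : E ≠ ⊥) : E.map (LinearMap.mulLeft D x) ≠ ⊥ := by
  intro h
  rw [← map_mulLeft_inv_map_mulLeft hx E, h, Submodule.map_bot] at hE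
  exact hE rfl

theorem exists_idealExt_eq_map_mulLeft {K : Type*} [Field K] [Algebra D K] {M : Submonoid D}
    {E : Submodule D K} (hE : IsFractional M E) :
    ∃ d ∈ M, ∃ I : Ideal D,
      idealExt K I = E.map (LinearMap.mulLeft D (algebraMap D K d)) := by
  obtain ⟨d, hd, hdE⟩ := hE
  refine ⟨d, hd, exists_idealExt_eq ?_⟩
  rintro _ ⟨y, hy, rfl⟩
  obtain ⟨a, ha⟩ := hdE y hy
  exact Submodule.mem_one.2 ⟨a, ha.trans (Algebra.smul_def d y)⟩

end Scaling

section Semistar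

variable {D : Type*} [CommRing D] {K : Type*} [Field K] [Algebra D K]
  {star : Submodule D K → Submodule D K}

/-- `E` is strictly `⋆`-finite: `F^⋆ = E^⋆` for some nonzero finitely generated `D`-submodule `F`
of `K`. The word *strictly* refers to the requirement `F ⊆ E`. -/
def IsStrictlyStarFinite (star : Submodule D K → Submodule D K) (E : Submodule D K) : Prop :=
  ∃ F : Submodule D K, F ≠ ⊥ ∧ F.FG ∧ F ≤ E ∧ star F = star E

/-- The ideal `I^⋆ ∩ D` of `D`, which is the smallest quasi-`⋆`-ideal containing `I` when `I` is
nonzero. -/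
def quasiStarClosure (star : Submodule D K → Submodule D K) (I : Ideal D) : Ideal D :=
  (star (idealExt K I)).comap (Algebra.linearMap D K)

theorem isStrictlyStarFinite_idealExt_iff [FaithfulSMul D K] {I : Ideal D} :
    IsStrictlyStarFinite star (idealExt K I) ↔
      ∃ J : Ideal D, J ≠ ⊥ ∧ J.FG ∧ J ≤ I ∧ star (idealExt K I) = star (idealExt K J) := by
  constructor
  · rintro ⟨F, hF, hFfg, hFI, hstarF⟩
    obtain ⟨J, rfl⟩ := exists_idealExt_eq (hFI.trans (idealExt_le_one I))
    exact ⟨J, idealExt_ne_bot_iff.1 hF, fg_idealExt_iff.1 hFfg, idealExt_le_idealExt_iff.1 hFI,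
      hstarF.symm⟩
  · rintro ⟨J, hJ, hJfg, hJI, hstarJ⟩
    exact ⟨idealExt K J, idealExt_ne_bot_iff.2 hJ, fg_idealExt_iff.2 hJfg,
      idealExt_le_idealExt_iff.2 hJI, hstarJ.symm⟩

theorem StarNoetherian.wellFoundedGT (h : StarNoetherian star) :
    WellFoundedGT {I : Ideal D // QuasiStarIdeal star I} :=
  wellFoundedGT_iff_monotone_chain_condition.2 fun c ↦
    (h ((OrderHom.Subtype.val _).comp c) fun n ↦ (c n).2).imp fun _ hn m hm ↦
      Subtype.ext (hn m hm).symm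

namespace IsSemistarOperation

theorem star_le_star_iff (hstar : IsSemistarOperation star) {E F : Submodule D K} (hE : E ≠ ⊥)
    (hF : F ≠ ⊥) : star E ≤ star F ↔ E ≤ star F :=
  ⟨(hstar.le_star hE).trans, fun h ↦
    (hstar.mono hE (hstar.ne_bot hF) h).trans_eq (hstar.star_star hF)⟩

theorem isStrictlyStarFinite_map_mulLeft (hstar : IsSemistarOperation star) {x : K} (hx : x ≠ 0)
    {E : Submodule D K} (hE : IsStrictlyStarFinite star E) :
    IsStrictlyStarFinite star (E.map (LinearMap.mulLeft D x)) := by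
  obtain ⟨F, hF, hFfg, hFE, hstarF⟩ := hE
  refine ⟨F.map (LinearMap.mulLeft D x), map_mulLeft_ne_bot hx hF, hFfg.map _,
    Submodule.map_mono hFE, ?_⟩
  rw [hstar.map_smul x hx hF, hstarF, hstar.map_smul x hx (ne_bot_of_le_ne_bot hF hFE)]

variable [FaithfulSMul D K]

theorem star_idealExt_le_iff (hstar : IsSemistarOperation star) {I J : Ideal D} (hI : I ≠ ⊥)
    (hJ : J ≠ ⊥) : star (idealExt K I) ≤ star (idealExt K J) ↔ I ≤ quasiStarClosure star J :=
  (hstar.star_le_star_iff (idealExt_ne_bot_iff.2 hI) (idealExt_ne_bot_iff.2 hJ)).trans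
    Submodule.map_le_iff_le_comap

theorem star_idealExt_mono (hstar : IsSemistarOperation star) {I J : Ideal D} (hI : I ≠ ⊥)
    (h : I ≤ J) : star (idealExt K I) ≤ star (idealExt K J) :=
  hstar.mono (idealExt_ne_bot_iff.2 hI) (idealExt_ne_bot_iff.2 (ne_bot_of_le_ne_bot hI h))
    (idealExt_le_idealExt_iff.2 h)

theorem le_quasiStarClosure (hstar : IsSemistarOperation star) {I : Ideal D} (hI : I ≠ ⊥) :
    I ≤ quasiStarClosure star I :=
  (hstar.star_idealExt_le_iff hI hI).1 le_rfl

theorem quasiStarIdeal_quasiStarClosure (hstar : IsSemistarOperation star) {I : Ideal D}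
    (hI : I ≠ ⊥) : QuasiStarIdeal star (quasiStarClosure star I) := by
  have hcl : quasiStarClosure star I ≠ ⊥ :=
    ne_bot_of_le_ne_bot hI (hstar.le_quasiStarClosure hI)
  exact ⟨hcl, le_antisymm
    (Submodule.comap_mono ((hstar.star_idealExt_le_iff hcl hI).2 le_rfl))
    (hstar.le_quasiStarClosure hcl)⟩

theorem exists_fg_maximal_quasiStarClosure (hstar : IsSemistarOperation star)
    (hN : StarNoetherian star) {I : Ideal D} (hI : I ≠ ⊥) :
    ∃ J : Ideal D, J ≠ ⊥ ∧ J.FG ∧ J ≤ I ∧ ∀ J' : Ideal D, J'.FG → J ≤ J' → J' ≤ I →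
      quasiStarClosure star J' ≤ quasiStarClosure star J := by
  have := hN.wellFoundedGT
  obtain ⟨x, hxI, hx⟩ := Submodule.exists_mem_ne_zero_of_ne_bot hI
  have hspan : Ideal.span {x} ≠ ⊥ := mt Ideal.span_singleton_eq_bot.1 hx
  obtain ⟨A, ⟨J, hJ, hJfg, hJI, hJA⟩, hmax⟩ := exists_maximal_of_wellFoundedGT
    (fun A : {A : Ideal D // QuasiStarIdeal star A} ↦
      ∃ J : Ideal D, J ≠ ⊥ ∧ J.FG ∧ J ≤ I ∧ quasiStarClosure star J = A)
    ⟨⟨_, hstar.quasiStarIdeal_quasiStarClosure hspan⟩, Ideal.span {x}, hspan,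
      Submodule.fg_span_singleton x, (Ideal.span_singleton_le_iff_mem I).2 hxI, rfl⟩
  refine ⟨J, hJ, hJfg, hJI, fun J' hJ'fg hJJ' hJ'I ↦ ?_⟩
  have hJ' : J' ≠ ⊥ := ne_bot_of_le_ne_bot hJ hJJ'
  have hA : (A : Ideal D) ≤ quasiStarClosure star J' :=
    hJA.ge.trans (Submodule.comap_mono (hstar.star_idealExt_mono hJ hJJ'))
  rw [hJA]
  exact hmax (y := ⟨_, hstar.quasiStarIdeal_quasiStarClosure hJ'⟩)
    ⟨J', hJ', hJ'fg, hJ'I, rfl⟩ hA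

theorem isStrictlyStarFinite_idealExt (hstar : IsSemistarOperation star)
    (hN : StarNoetherian star) {I : Ideal D} (hI : I ≠ ⊥) :
    IsStrictlyStarFinite star (idealExt K I) := by
  obtain ⟨J, hJ, hJfg, hJI, hmax⟩ := hstar.exists_fg_maximal_quasiStarClosure hN hI
  refine isStrictlyStarFinite_idealExt_iff.2 ⟨J, hJ, hJfg, hJI, le_antisymm
    ((hstar.star_idealExt_le_iff hI hJ).2 fun x hx ↦ ?_) (hstar.star_idealExt_mono hJ hJI)⟩
  have hsup : J ⊔ Ideal.span {x} ≠ ⊥ := ne_bot_of_le_ne_bot hJ le_sup_left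
  have hsupI : J ⊔ Ideal.span {x} ≤ I :=
    sup_le hJI ((Ideal.span_singleton_le_iff_mem I).2 hx)
  exact hmax _ (Submodule.FG.sup hJfg (Submodule.fg_span_singleton x)) le_sup_left hsupI
    (hstar.le_quasiStarClosure hsup (Ideal.mem_sup_right (Ideal.mem_span_singleton_self x)))

theorem starNoetherian_of_isStrictlyStarFinite_idealExt (hstar : IsSemistarOperation star)
    (h : ∀ I : Ideal D, I ≠ ⊥ → IsStrictlyStarFinite star (idealExt K I)) :
    StarNoetherian star := by
  intro c hc
  have hle (m : ℕ) : c m ≤ ⨆ n, c n := le_iSup c m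
  obtain ⟨J, hJ, hJfg, hJc, hstarJ⟩ := isStrictlyStarFinite_idealExt_iff.1
    (h (⨆ n, c n) (ne_bot_of_le_ne_bot (hc 0).1 (hle 0)))
  obtain ⟨_, ⟨n, rfl⟩, hJn⟩ := (Submodule.fg_iff_compact J).1 hJfg (Set.range c) _
    (Set.range_nonempty c) (directedOn_range.2 c.monotone.directed_le) isLUB_iSup hJc
  refine ⟨n, fun m hnm ↦ le_antisymm ?_ (c.monotone hnm)⟩
  have hstarc : star (idealExt K (c m)) ≤ star (idealExt K (c n)) :=
    calc star (idealExt K (c m)) ≤ star (idealExt K (⨆ n, c n)) :=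
          hstar.star_idealExt_mono (hc m).1 (hle m)
      _ = star (idealExt K J) := hstarJ
      _ ≤ star (idealExt K (c n)) := hstar.star_idealExt_mono hJ hJn
  exact ((hstar.star_idealExt_le_iff (hc m).1 (hc n).1).1 hstarc).trans_eq (hc n).2

theorem starNoetherian_iff_isStrictlyStarFinite_idealExt (hstar : IsSemistarOperation star) :
    StarNoetherian star ↔ ∀ I : Ideal D, I ≠ ⊥ → IsStrictlyStarFinite star (idealExt K I) :=
  ⟨fun hN _ ↦ hstar.isStrictlyStarFinite_idealExt hN,
    hstar.starNoetherian_of_isStrictlyStarFinite_idealExt⟩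

theorem forall_isStrictlyStarFinite_idealExt_iff_isFractional
    (hstar : IsSemistarOperation star) :
    (∀ I : Ideal D, I ≠ ⊥ → IsStrictlyStarFinite star (idealExt K I)) ↔
      ∀ E : Submodule D K, E ≠ ⊥ → IsFractional (nonZeroDivisors D) E →
        IsStrictlyStarFinite star E := by
  refine ⟨fun h E hE hfrac ↦ ?_, fun h I hI ↦ h _ (idealExt_ne_bot_iff.2 hI)
    (FractionalIdeal.isFractional_of_le_one _ (idealExt_le_one I))⟩
  have := (algebraMap D K).domain_nontrivial
  obtain ⟨d, hd, I, hI⟩ := exists_idealExt_eq_map_mulLeft hfrac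
  have hd0 : algebraMap D K d ≠ 0 :=
    (FaithfulSMul.algebraMap_eq_zero_iff D K).not.2 (nonZeroDivisors.ne_zero hd)
  have hI0 : I ≠ ⊥ := by
    rw [← idealExt_ne_bot_iff (K := K), hI]
    exact map_mulLeft_ne_bot hd0 hE
  rw [← map_mulLeft_inv_map_mulLeft hd0 E, ← hI]
  exact hstar.isStrictlyStarFinite_map_mulLeft (inv_ne_zero hd0) (h I hI0)

end IsSemistarOperation

theorem starNoetherian_iff_ideals_star_finite_general [FaithfulSMul D K]
    (star : Submodule D K → Submodule D K) (hstar : IsSemistarOperation star) :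
    (StarNoetherian star ↔
      ∀ I : Ideal D, I ≠ ⊥ →
        ∃ J : Ideal D, J ≠ ⊥ ∧ J.FG ∧ J ≤ I ∧
          star (idealExt K I) = star (idealExt K J)) ∧
    (StarNoetherian star ↔
      ∀ E : Submodule D K, E ≠ ⊥ → IsFractional (nonZeroDivisors D) E →
        ∃ F : Submodule D K, F ≠ ⊥ ∧ F.FG ∧ F ≤ E ∧ star F = star E) := by
  simp_rw [← isStrictlyStarFinite_idealExt_iff]
  exact ⟨hstar.starNoetherian_iff_isStrictlyStarFinite_idealExt,
    hstar.starNoetherian_iff_isStrictlyStarFinite_idealExt.trans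
      hstar.forall_isStrictlyStarFinite_idealExt_iff_isFractional⟩

end Semistar

section Statement

variable {D : Type*} [CommRing D] [IsDomain D]
variable {K : Type*} [Field K] [Algebra D K] [IsFractionRing D K]

/-- `D` an integral domain, `⋆` a semistar operation. `D` is ⋆-Noetherian
iff every nonzero ideal `I` of `D` admits a (nonzero) finitely generated ideal `J ⊆ I` with
`I^⋆ = J^⋆`; consequently, `D` is ⋆-Noetherian iff every nonzero fractional ideal `E` of `D`
admits a nonzero finitely generated `D`-submodule `F ⊆ E` of `K` with `F^⋆ = E^⋆`. -/
theorem starNoetherian_iff_ideals_star_finite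
    (star : Submodule D K → Submodule D K) (hstar : IsSemistarOperation star) :
    (StarNoetherian star ↔
      ∀ I : Ideal D, I ≠ ⊥ →
        ∃ J : Ideal D, J ≠ ⊥ ∧ J.FG ∧ J ≤ I ∧
          star (idealExt K I) = star (idealExt K J)) ∧
    (StarNoetherian star ↔
      ∀ E : Submodule D K, E ≠ ⊥ → IsFractional (nonZeroDivisors D) E →
        ∃ F : Submodule D K, F ≠ ⊥ ∧ F.FG ∧ F ≤ E ∧ star F = star E) :=
  starNoetherian_iff_ideals_star_finite_general star hstar

end Statement
end
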